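/- Let Λ be a proper Λ-sequence and f : [0,1] → ℝ a Lebesgue-integrable function. Then ‖K_nf − f‖_Λ → 0 as n → ∞ (with V_Λ(K_nf − f) understood as a quantity in [0,∞]) if and only if f is continuous, of bounded Λ-variation, and continuous in Λ-variation. -/

import Mathlib

open Filter Set MeasureTheory
open scoped ENNReal Topology

/-- `l` is a Λ-sequence (indexed from 0, so `l 0` plays the role of `λ₁`):
a nondecreasing sequence of positive reals whose reciprocals have divergent sum. -/
def IsLambdaSeq (l : ℕ → ℝ) : Prop :=
  Monotone l ∧ (∀ n, 0 < l n) ∧ ¬ Summable (fun n => 1 / l n)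

/-- A proper Λ-sequence: additionally `λₙ → ∞`. -/
def IsProperLambdaSeq (l : ℕ → ℝ) : Prop :=
  IsLambdaSeq l ∧ Tendsto l atTop atTop

/-- The Λ-variation of `f` computed over partition points taken from `K`:
the supremum of `∑ⱼ |f(x_{j+1}) - f(x_j)| / λ_{β(j)}` over all `m`, all nondecreasing
tuples `x₁ ≤ … ≤ x_{m+1}` of points of `K` and all permutations `β` of the gaps. -/
noncomputable def lamVarOn (l : ℕ → ℝ) (f : ℝ → ℝ) (K : Set ℝ) : ℝ≥0∞ :=
  ⨆ (m : ℕ) (x : Fin (m + 1) → ℝ) (_ : Monotone x) (_ : ∀ j, x j ∈ K)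
    (β : Equiv.Perm (Fin m)),
    ∑ j : Fin m, ENNReal.ofReal (|f (x j.succ) - f (x j.castSucc)| / l (β j))

/-- The Λ-variation of `f : [0,1] → ℝ`. -/
noncomputable def lamVar (l : ℕ → ℝ) (f : ℝ → ℝ) : ℝ≥0∞ :=
  lamVarOn l f (Set.Icc 0 1)

/-- The norm `‖f‖_Λ = V_Λ(f) + |f 0|` (valued in `[0,∞]`). -/
noncomputable def lamNorm (l : ℕ → ℝ) (f : ℝ → ℝ) : ℝ≥0∞ :=
  lamVar l f + ENNReal.ofReal |f 0|

/-- `f` is continuous in Λ-variation: `V_{Λ_(m)}(f) → 0` as `m → ∞`. -/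
def ContInLamVar (l : ℕ → ℝ) (f : ℝ → ℝ) : Prop :=
  Tendsto (fun m => lamVar (fun n => l (n + m)) f) atTop (𝓝 0)

/-- The restricted Λ-variation `V_{Λ,δ}(f)`: the supremum of `∑ⱼ |f(bⱼ) - f(aⱼ)| / λⱼ`
over all finite sequences of nonoverlapping closed subintervals `[aⱼ, bⱼ]` of `[0,1]`
of length at most `δ`, listed in any order. -/
noncomputable def lamVarDelta (l : ℕ → ℝ) (δ : ℝ) (f : ℝ → ℝ) : ℝ≥0∞ :=
  ⨆ (k : ℕ) (a : Fin k → ℝ) (b : Fin k → ℝ)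
    (_ : ∀ j, 0 ≤ a j ∧ a j ≤ b j ∧ b j ≤ 1 ∧ b j - a j ≤ δ)
    (_ : ∀ i j, i ≠ j → b i ≤ a j ∨ b j ≤ a i),
    ∑ j : Fin k, ENNReal.ofReal (|f (b j) - f (a j)| / l j)

/-- The `n`-th Bernstein polynomial of `f : [0,1] → ℝ`. -/
noncomputable def bern (n : ℕ) (f : ℝ → ℝ) (x : ℝ) : ℝ :=
  ∑ k ∈ Finset.range (n + 1),
    f ((k : ℝ) / n) * (n.choose k : ℝ) * x ^ k * (1 - x) ^ (n - k)

/-- The `n`-th Kantorovich polynomial of `f : [0,1] → ℝ`. -/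
noncomputable def kant (n : ℕ) (f : ℝ → ℝ) (x : ℝ) : ℝ :=
  ∑ k ∈ Finset.range (n + 1),
    (n.choose k : ℝ) * x ^ k * (1 - x) ^ (n - k) *
      ((n + 1) * ∫ t in ((k : ℝ) / (n + 1))..(((k : ℝ) + 1) / (n + 1)), f t)

/-!
Let `u₁, …, uₙ` be independent and uniform on `[0, 1]`. The counts `#{i | uᵢ ≤ x}` are binomial with
parameters `n` and `x` and nondecreasing in `x`, so `K_n f` is an average of compositions of `f`
with nondecreasing maps. Hence `V_Λ(K_n f) ≤ V_Λ(f)`, for all weights at once and in particular for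
every tail `Λ_(p)`. If `f` is continuous, then `K_n f → f` uniformly, so the part of
`V_Λ(K_n f - f)` carried by the first `p` weights tends to `0`, while the rest is at most
`2 V_{Λ_(p)}(f)`, which is small for large `p` when `f` is continuous in Λ-variation.

Conversely, convergence in `‖·‖_Λ` is uniform and preserves finiteness of `V_Λ` and continuity in
Λ-variation; polynomials have all these properties because they have bounded variation and `λₙ → ∞`.
-/

section LambdaVariation

/-- The Λ-sum of `f` over the partition `x`, with the weight `1 / λ_{β j}` on the `j`-th gap.
It is kept in factored form in `ℝ≥0∞`, where no finiteness or positivity is needed to manipulate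
it; `lamVarOn` is the supremum of these sums. -/
noncomputable def lamSum (l : ℕ → ℝ) (f : ℝ → ℝ) {m : ℕ} (x : Fin (m + 1) → ℝ)
    (β : Equiv.Perm (Fin m)) : ℝ≥0∞ :=
  ∑ j : Fin m, ‖f (x j.succ) - f (x j.castSucc)‖ₑ * ENNReal.ofReal (l (β j))⁻¹

variable {l l' : ℕ → ℝ} {f g : ℝ → ℝ} {K : Set ℝ}

lemma sum_ofReal_abs_div_eq_lamSum (l : ℕ → ℝ) (f : ℝ → ℝ) {m : ℕ} (x : Fin (m + 1) → ℝ)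
    (β : Equiv.Perm (Fin m)) :
    ∑ j : Fin m, ENNReal.ofReal (|f (x j.succ) - f (x j.castSucc)| / l (β j)) = lamSum l f x β := by
  simp only [lamSum, div_eq_mul_inv, ENNReal.ofReal_mul (abs_nonneg _), ← Real.enorm_eq_ofReal_abs]

lemma lamVarOn_le_iff {B : ℝ≥0∞} :
    lamVarOn l f K ≤ B ↔ ∀ (m : ℕ) (x : Fin (m + 1) → ℝ), Monotone x → (∀ j, x j ∈ K) →
      ∀ β : Equiv.Perm (Fin m), lamSum l f x β ≤ B := by
  simp only [lamVarOn, sum_ofReal_abs_div_eq_lamSum, iSup_le_iff]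

lemma lamSum_le_lamVarOn {m : ℕ} {x : Fin (m + 1) → ℝ} (hx : Monotone x) (hxK : ∀ j, x j ∈ K)
    (β : Equiv.Perm (Fin m)) : lamSum l f x β ≤ lamVarOn l f K :=
  lamVarOn_le_iff.1 le_rfl m x hx hxK β

lemma lamVarOn_congr (h : EqOn f g K) : lamVarOn l f K = lamVarOn l g K := by
  refine eq_of_forall_ge_iff fun B => ?_
  simp only [lamVarOn_le_iff, lamSum]
  refine forall₄_congr fun m x _ hxK => ?_
  simp only [h (hxK _)]

lemma lamVarOn_anti_weight (hpos : ∀ n, 0 < l n) (hle : ∀ n, l n ≤ l' n) :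
    lamVarOn l' f K ≤ lamVarOn l f K := by
  refine lamVarOn_le_iff.2 fun m x hx hxK β => le_trans ?_ (lamSum_le_lamVarOn hx hxK β)
  unfold lamSum
  gcongr with j
  · exact hpos _
  · exact hle _

lemma lamVarOn_sub_le (l : ℕ → ℝ) (f g : ℝ → ℝ) (K : Set ℝ) :
    lamVarOn l (fun x => f x - g x) K ≤ lamVarOn l f K + lamVarOn l g K := by
  refine lamVarOn_le_iff.2 fun m x hx hxK β => ?_
  calc lamSum l (fun x => f x - g x) x β
      ≤ lamSum l f x β + lamSum l g x β := by
        simp only [lamSum, ← Finset.sum_add_distrib, ← add_mul, sub_sub_sub_comm]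
        gcongr
        exact enorm_sub_le
    _ ≤ lamVarOn l f K + lamVarOn l g K :=
        add_le_add (lamSum_le_lamVarOn hx hxK β) (lamSum_le_lamVarOn hx hxK β)

lemma lamVarOn_le_lamVarOn_add_lamVarOn_sub (l : ℕ → ℝ) (f g : ℝ → ℝ) (K : Set ℝ) :
    lamVarOn l f K ≤ lamVarOn l g K + lamVarOn l (fun x => g x - f x) K := by
  simpa only [sub_sub_cancel] using lamVarOn_sub_le l g (fun x => g x - f x) K

lemma lamVarOn_comp_le_of_monotoneOn {K' : Set ℝ} {φ : ℝ → ℝ} (hφ : MonotoneOn φ K)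
    (hmaps : MapsTo φ K K') : lamVarOn l (fun x => f (φ x)) K ≤ lamVarOn l f K' :=
  lamVarOn_le_iff.2 fun _ x hx hxK β =>
    lamSum_le_lamVarOn (x := φ ∘ x) (fun _ _ hij => hφ (hxK _) (hxK _) (hx hij))
      (fun j => hmaps (hxK j)) β

lemma lamVarOn_integral_le {Ω : Type*} [MeasurableSpace Ω] {μ : Measure Ω} [IsProbabilityMeasure μ]
    {G : Ω → ℝ → ℝ} {B : ℝ≥0∞} (hint : ∀ x ∈ K, Integrable (fun ω => G ω x) μ)
    (hG : ∀ᵐ ω ∂μ, lamVarOn l (G ω) K ≤ B) :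
    lamVarOn l (fun x => ∫ ω, G ω x ∂μ) K ≤ B := by
  refine lamVarOn_le_iff.2 fun m x hx hxK β => ?_
  have hdiff (j : Fin m) : Integrable (fun ω => G ω (x j.succ) - G ω (x j.castSucc)) μ :=
    (hint _ (hxK _)).sub (hint _ (hxK _))
  calc lamSum l (fun x => ∫ ω, G ω x ∂μ) x β
      ≤ ∑ j : Fin m, ∫⁻ ω, ‖G ω (x j.succ) - G ω (x j.castSucc)‖ₑ *
          ENNReal.ofReal (l (β j))⁻¹ ∂μ := by
        refine Finset.sum_le_sum fun j _ => ?_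
        rw [lintegral_mul_const' _ _ ENNReal.ofReal_ne_top,
          ← integral_sub (hint _ (hxK _)) (hint _ (hxK _))]
        gcongr
        exact enorm_integral_le_lintegral_enorm _
    _ = ∫⁻ ω, lamSum l (G ω) x β ∂μ :=
        (lintegral_finsetSum' _ fun j _ => (hdiff j).1.enorm.mul_const _).symm
    _ ≤ ∫⁻ _, B ∂μ :=
        lintegral_mono_ae (hG.mono fun ω hω => (lamSum_le_lamVarOn hx hxK β).trans hω)
    _ = B := by simp

lemma sum_edist_succ_le_eVariationOn {m : ℕ} {x : Fin (m + 1) → ℝ} (hx : Monotone x)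
    (hxK : ∀ j, x j ∈ K) :
    ∑ j : Fin m, edist (f (x j.succ)) (f (x j.castSucc)) ≤ eVariationOn f K := by
  let y (i : ℕ) : ℝ := x (Fin.ofNat (m + 1) (min i m))
  have hy (j : Fin (m + 1)) : y j = x j := by
    simp [y, Nat.min_eq_left (Nat.lt_succ_iff.1 j.2)]
  calc ∑ j : Fin m, edist (f (x j.succ)) (f (x j.castSucc))
      = ∑ i ∈ Finset.range m, edist (f (y (i + 1))) (f (y i)) := by
        rw [Finset.sum_range]
        simp only [← hy, Fin.val_succ, Fin.val_castSucc]
    _ ≤ eVariationOn f K := by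
        refine eVariationOn.sum_le (fun i j hij => hx ?_) fun i => hxK _
        rw [Fin.le_def]
        simp only [Fin.val_ofNat]
        rw [Nat.mod_eq_of_lt (by omega), Nat.mod_eq_of_lt (by omega)]
        omega

lemma lamVarOn_le_eVariationOn_mul {c : ℝ} (hc : 0 < c) (hl : ∀ n, c ≤ l n) (f : ℝ → ℝ)
    (K : Set ℝ) : lamVarOn l f K ≤ eVariationOn f K * ENNReal.ofReal c⁻¹ := by
  refine lamVarOn_le_iff.2 fun m x hx hxK β => ?_
  calc lamSum l f x β
      ≤ ∑ j : Fin m, edist (f (x j.succ)) (f (x j.castSucc)) * ENNReal.ofReal c⁻¹ := by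
        simp only [lamSum, edist_eq_enorm_sub]
        gcongr with j
        exact hl _
    _ ≤ eVariationOn f K * ENNReal.ofReal c⁻¹ := by
        rw [← Finset.sum_mul]
        gcongr
        exact sum_edist_succ_le_eVariationOn hx hxK

lemma enorm_sub_mul_le_lamVarOn {x y : ℝ} (hx : x ∈ K) (hy : y ∈ K) (hxy : x ≤ y) :
    ‖f y - f x‖ₑ * ENNReal.ofReal (l 0)⁻¹ ≤ lamVarOn l f K := by
  have hmono : Monotone ![x, y] := by simpa [Fin.monotone_iff_le_succ]
  have hmem : ∀ j, ![x, y] j ∈ K := by simp [Fin.forall_fin_two, hx, hy]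
  simpa [lamSum] using lamSum_le_lamVarOn (l := l) (f := f) hmono hmem 1

lemma sum_filter_lt_le_mul_sum_range {m : ℕ} {x : Fin (m + 1) → ℝ} {η : ℝ≥0∞}
    (hη : ∀ j, ‖f (x j)‖ₑ ≤ η) (l : ℕ → ℝ) (β : Equiv.Perm (Fin m)) (p : ℕ) :
    ∑ j with (β j : ℕ) < p, ‖f (x j.succ) - f (x j.castSucc)‖ₑ * ENNReal.ofReal (l (β j))⁻¹ ≤
      2 * η * ∑ i ∈ Finset.range p, ENNReal.ofReal (l i)⁻¹ := by
  have hincr (j : Fin m) : ‖f (x j.succ) - f (x j.castSucc)‖ₑ ≤ 2 * η :=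
    enorm_sub_le.trans ((add_le_add (hη _) (hη _)).trans_eq (two_mul η).symm)
  have hinj : Function.Injective fun j : Fin m => (β j : ℕ) := Fin.val_injective.comp β.injective
  calc ∑ j with (β j : ℕ) < p, ‖f (x j.succ) - f (x j.castSucc)‖ₑ * ENNReal.ofReal (l (β j))⁻¹
      ≤ ∑ j with (β j : ℕ) < p, 2 * η * ENNReal.ofReal (l (β j))⁻¹ := by
        gcongr with j
        exact hincr j
    _ = 2 * η * ∑ i ∈ ({j | (β j : ℕ) < p} : Finset (Fin m)).image fun j => (β j : ℕ),
          ENNReal.ofReal (l i)⁻¹ := by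
        rw [Finset.sum_image hinj.injOn, Finset.mul_sum]
    _ ≤ 2 * η * ∑ i ∈ Finset.range p, ENNReal.ofReal (l i)⁻¹ := by
        gcongr
        simp [Finset.image_subset_iff]

lemma sum_filter_not_lt_le_lamVarOn_shift {m : ℕ} {x : Fin (m + 1) → ℝ} (hx : Monotone x)
    (hxK : ∀ j, x j ∈ K) (l : ℕ → ℝ) (β : Equiv.Perm (Fin m)) (p : ℕ) :
    ∑ j with ¬ (β j : ℕ) < p, ‖f (x j.succ) - f (x j.castSucc)‖ₑ * ENNReal.ofReal (l (β j))⁻¹ ≤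
      lamVarOn (fun n => l (n + p)) f K := by
  rcases le_or_gt m p with hmp | hpm
  · have hempty : ({j | ¬ (β j : ℕ) < p} : Finset (Fin m)) = ∅ :=
      Finset.filter_false_of_mem fun j _ => not_not.2 ((β j).2.trans_le hmp)
    rw [hempty, Finset.sum_empty]
    exact zero_le
  have : NeZero m := ⟨by omega⟩
  -- Subtraction in `Fin m` wraps around, so the gaps of rank below `p` keep distinct weights.
  let rot : Equiv.Perm (Fin m) := β.trans (Equiv.subRight ⟨p, hpm⟩)
  have hrot (j : Fin m) (hj : ¬ (β j : ℕ) < p) : (rot j : ℕ) + p = β j := by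
    have hval : (rot j : ℕ) = β j - p := Fin.sub_val_of_le (b := ⟨p, hpm⟩) (not_lt.1 hj)
    omega
  calc ∑ j with ¬ (β j : ℕ) < p, ‖f (x j.succ) - f (x j.castSucc)‖ₑ * ENNReal.ofReal (l (β j))⁻¹
      = ∑ j with ¬ (β j : ℕ) < p,
          ‖f (x j.succ) - f (x j.castSucc)‖ₑ * ENNReal.ofReal (l (rot j + p))⁻¹ :=
        Finset.sum_congr rfl fun j hj => by rw [hrot j (Finset.mem_filter.1 hj).2]
    _ ≤ lamSum (fun n => l (n + p)) f x rot :=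
        Finset.sum_le_sum_of_subset (Finset.filter_subset _ _)
    _ ≤ lamVarOn (fun n => l (n + p)) f K := lamSum_le_lamVarOn hx hxK rot

lemma lamVarOn_le_mul_sum_add_lamVarOn_shift {η : ℝ≥0∞} (hη : ∀ x ∈ K, ‖f x‖ₑ ≤ η) (l : ℕ → ℝ)
    (p : ℕ) :
    lamVarOn l f K ≤ 2 * η * ∑ i ∈ Finset.range p, ENNReal.ofReal (l i)⁻¹ +
      lamVarOn (fun n => l (n + p)) f K := by
  refine lamVarOn_le_iff.2 fun m x hx hxK β => ?_
  rw [lamSum, ← Finset.sum_filter_add_sum_filter_not Finset.univ fun j => (β j : ℕ) < p]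
  exact add_le_add (sum_filter_lt_le_mul_sum_range (fun j => hη _ (hxK j)) l β p)
    (sum_filter_not_lt_le_lamVarOn_shift hx hxK l β p)

end LambdaVariation

section LambdaNorm

variable {l : ℕ → ℝ} {f g : ℝ → ℝ}

lemma enorm_le_mul_lamNorm (hl : 0 < l 0) (f : ℝ → ℝ) {x : ℝ} (hx : x ∈ Icc (0 : ℝ) 1) :
    ‖f x‖ₑ ≤ (ENNReal.ofReal (l 0) + 1) * lamNorm l f := by
  have hincr : ‖f x - f 0‖ₑ ≤ ENNReal.ofReal (l 0) * lamVar l f := by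
    have h := enorm_sub_mul_le_lamVarOn (l := l) (f := f) (left_mem_Icc.2 zero_le_one) hx hx.1
    rw [ENNReal.ofReal_inv_of_pos hl, ← div_eq_mul_inv] at h
    rw [mul_comm]
    exact (ENNReal.div_le_iff (ENNReal.ofReal_pos.2 hl).ne' ENNReal.ofReal_ne_top).1 h
  have hzero : ‖f 0‖ₑ ≤ lamNorm l f := by
    rw [Real.enorm_eq_ofReal_abs]
    exact le_add_self
  calc ‖f x‖ₑ = ‖(f x - f 0) + f 0‖ₑ := by rw [sub_add_cancel]
    _ ≤ ‖f x - f 0‖ₑ + ‖f 0‖ₑ := enorm_add_le _ _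
    _ ≤ ENNReal.ofReal (l 0) * lamNorm l f + lamNorm l f := by
        gcongr
        exact hincr.trans (by gcongr; exact le_self_add)
    _ = (ENNReal.ofReal (l 0) + 1) * lamNorm l f := by rw [add_mul, one_mul]

variable {ι : Type*} {u : Filter ι} {F : ι → ℝ → ℝ}

lemma tendstoUniformlyOn_of_tendsto_lamNorm_sub (hl : 0 < l 0)
    (h : Tendsto (fun i => lamNorm l fun x => F i x - f x) u (𝓝 0)) :
    TendstoUniformlyOn F f u (Icc 0 1) := by
  rw [EMetric.tendstoUniformlyOn_iff]
  intro ε hε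
  have hmul : Tendsto (fun i => (ENNReal.ofReal (l 0) + 1) * lamNorm l fun x => F i x - f x) u
      (𝓝 0) := by
    simpa using ENNReal.Tendsto.const_mul h (Or.inr (by finiteness))
  filter_upwards [hmul.eventually_lt_const hε] with i hi x hx
  rw [edist_comm, edist_eq_enorm_sub]
  exact (enorm_le_mul_lamNorm hl _ hx).trans_lt hi

lemma tendsto_lamVar_of_tendsto_lamNorm
    (h : Tendsto (fun i => lamNorm l (F i)) u (𝓝 0)) : Tendsto (fun i => lamVar l (F i)) u (𝓝 0) :=
  tendsto_of_tendsto_of_tendsto_of_le_of_le tendsto_const_nhds h (fun _ => zero_le)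
    fun _ => le_self_add

lemma lamVar_lt_top_of_tendsto_lamVar_sub [u.NeBot] (hF : ∀ i, lamVar l (F i) < ⊤)
    (h : Tendsto (fun i => lamVar l fun x => F i x - f x) u (𝓝 0)) : lamVar l f < ⊤ := by
  obtain ⟨i, hi⟩ := (h.eventually_lt_const ENNReal.zero_lt_top).exists
  exact (lamVarOn_le_lamVarOn_add_lamVarOn_sub l f (F i) _).trans_lt
    (ENNReal.add_lt_top.2 ⟨hF i, hi⟩)

lemma contInLamVar_of_tendsto_lamVar_sub [u.NeBot] (hmono : Monotone l) (hpos : ∀ n, 0 < l n)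
    (hF : ∀ i, ContInLamVar l (F i))
    (h : Tendsto (fun i => lamVar l fun x => F i x - f x) u (𝓝 0)) : ContInLamVar l f := by
  refine ENNReal.tendsto_nhds_zero.2 fun ε hε => ?_
  have hε2 : 0 < ε / 2 := ENNReal.half_pos hε.ne'
  obtain ⟨i, hi⟩ := (h.eventually_le_const hε2).exists
  filter_upwards [(hF i).eventually_le_const hε2] with m hm
  calc lamVar (fun n => l (n + m)) f
      ≤ lamVar (fun n => l (n + m)) (F i) + lamVar (fun n => l (n + m)) fun x => F i x - f x :=
        lamVarOn_le_lamVarOn_add_lamVarOn_sub _ _ _ _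
    _ ≤ lamVar (fun n => l (n + m)) (F i) + lamVar l fun x => F i x - f x := by
        gcongr
        exact lamVarOn_anti_weight hpos fun n => hmono (Nat.le_add_right n m)
    _ ≤ ε / 2 + ε / 2 := add_le_add hm hi
    _ = ε := ENNReal.add_halves ε

lemma contInLamVar_of_boundedVariationOn (htop : Tendsto l atTop atTop)
    (hf : BoundedVariationOn f (Icc 0 1)) : ContInLamVar l f := by
  have hbound : Tendsto (fun c : ℝ => eVariationOn f (Icc 0 1) * ENNReal.ofReal c⁻¹) atTop
      (𝓝 0) := by
    simpa using ENNReal.Tendsto.const_mul (ENNReal.tendsto_ofReal tendsto_inv_atTop_zero)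
      (Or.inr hf)
  refine ENNReal.tendsto_nhds_zero.2 fun ε hε => ?_
  obtain ⟨c, hcε, hc⟩ := ((hbound.eventually_le_const hε).and (eventually_gt_atTop 0)).exists
  filter_upwards [eventually_forall_ge_atTop.2 (htop.eventually_ge_atTop c)] with m hm
  exact (lamVarOn_le_eVariationOn_mul hc (fun n => hm _ (Nat.le_add_left m n)) f _).trans hcε

lemma lamVar_lt_top_of_boundedVariationOn (hmono : Monotone l) (hl : 0 < l 0)
    (hf : BoundedVariationOn f (Icc 0 1)) : lamVar l f < ⊤ :=
  (lamVarOn_le_eVariationOn_mul hl (fun n => hmono n.zero_le) f _).trans_lt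
    (ENNReal.mul_lt_top hf.lt_top ENNReal.ofReal_lt_top)

lemma lamNorm_sub_le (l : ℕ → ℝ) {η : ℝ≥0∞} (hη : ∀ x ∈ Icc (0 : ℝ) 1, ‖g x - f x‖ₑ ≤ η) (p : ℕ)
    (hg : lamVar (fun n => l (n + p)) g ≤ lamVar (fun n => l (n + p)) f) :
    lamNorm l (fun x => g x - f x) ≤
      η * (2 * ∑ i ∈ Finset.range p, ENNReal.ofReal (l i)⁻¹ + 1) +
        2 * lamVar (fun n => l (n + p)) f := by
  set S := ∑ i ∈ Finset.range p, ENNReal.ofReal (l i)⁻¹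
  set V := lamVar (fun n => l (n + p)) f
  have htail : lamVar (fun n => l (n + p)) (fun x => g x - f x) ≤ V + V :=
    (lamVarOn_sub_le _ g f _).trans (add_le_add_left hg V)
  calc lamNorm l (fun x => g x - f x)
      ≤ 2 * η * S + (V + V) + η := by
        refine add_le_add ((lamVarOn_le_mul_sum_add_lamVarOn_shift hη l p).trans ?_) ?_
        · gcongr
          exact htail
        · rw [← Real.enorm_eq_ofReal_abs]
          exact hη 0 (left_mem_Icc.2 zero_le_one)
    _ = η * (2 * S + 1) + 2 * V := by ring

lemma tendsto_lamNorm_sub_of_tendstoUniformlyOn (hunif : TendstoUniformlyOn F f u (Icc 0 1))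
    (hF : ∀ i p, lamVar (fun n => l (n + p)) (F i) ≤ lamVar (fun n => l (n + p)) f)
    (hf : ContInLamVar l f) : Tendsto (fun i => lamNorm l fun x => F i x - f x) u (𝓝 0) := by
  refine ENNReal.tendsto_nhds_zero.2 fun ε hε => ?_
  have hε2 : 0 < ε / 2 := ENNReal.half_pos hε.ne'
  have htail : Tendsto (fun p => 2 * lamVar (fun n => l (n + p)) f) atTop (𝓝 0) := by
    simpa using ENNReal.Tendsto.const_mul hf (Or.inr ENNReal.ofNat_ne_top)
  obtain ⟨p, hp⟩ := (htail.eventually_le_const hε2).exists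
  set S := 2 * ∑ i ∈ Finset.range p, ENNReal.ofReal (l i)⁻¹ + 1
  have hS : S ≠ ⊤ := by
    have hsum : ∑ i ∈ Finset.range p, ENNReal.ofReal (l i)⁻¹ ≠ ⊤ :=
      ENNReal.sum_ne_top.2 fun _ _ => ENNReal.ofReal_ne_top
    finiteness
  filter_upwards [EMetric.tendstoUniformlyOn_iff.1 hunif _ (ENNReal.div_pos hε2.ne' hS)] with i hi
  have hη : ∀ x ∈ Icc (0 : ℝ) 1, ‖F i x - f x‖ₑ ≤ ε / 2 / S := fun x hx => by
    rw [← edist_eq_enorm_sub, edist_comm]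
    exact (hi x hx).le
  calc lamNorm l (fun x => F i x - f x)
      ≤ ε / 2 / S * S + 2 * lamVar (fun n => l (n + p)) f := lamNorm_sub_le l hη p (hF i p)
    _ ≤ ε / 2 + ε / 2 := add_le_add (ENNReal.mul_le_of_le_div le_rfl) hp
    _ = ε := ENNReal.add_halves ε

end LambdaNorm

section BernsteinSum

/-- The Bernstein polynomial of degree `n` with coefficients `F 0, …, F n`, the common form of
`bern` and `kant`. Indexing the coefficients by `ℕ` lets them be shifted freely. -/
noncomputable def bernsteinSum (n : ℕ) (F : ℕ → ℝ) (x : ℝ) : ℝ :=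
  ∑ k ∈ Finset.range (n + 1), (n.choose k : ℝ) * x ^ k * (1 - x) ^ (n - k) * F k

lemma bernsteinSum_eq_sum_antidiagonal (n : ℕ) (F : ℕ → ℝ) (x : ℝ) :
    bernsteinSum n F x =
      ∑ ij ∈ Finset.HasAntidiagonal.antidiagonal n,
        (n.choose ij.1 : ℝ) * (x ^ ij.1 * (1 - x) ^ ij.2 * F ij.1) := by
  rw [Finset.Nat.sum_antidiagonal_eq_sum_range_succ_mk]
  simp only [bernsteinSum, mul_assoc]

lemma bernsteinSum_succ (n : ℕ) (F : ℕ → ℝ) (x : ℝ) :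
    bernsteinSum (n + 1) F x =
      x * bernsteinSum n (fun k => F (k + 1)) x + (1 - x) * bernsteinSum n F x := by
  simp only [bernsteinSum_eq_sum_antidiagonal, Finset.mul_sum]
  rw [Finset.sum_antidiagonal_choose_succ_mul (fun i j => x ^ i * (1 - x) ^ j * F i), add_comm]
  congr 1 <;> refine Finset.sum_congr rfl fun ij hij => ?_
  · rw [← Nat.choose_symm_of_eq_add (Finset.HasAntidiagonal.mem_antidiagonal.1 hij).symm]
    ring
  · ring

lemma abs_bernsteinSum_sub_le {n : ℕ} {F G : ℕ → ℝ} {ε : ℝ} (h : ∀ k ≤ n, |F k - G k| ≤ ε) {x : ℝ}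
    (hx : x ∈ Icc (0 : ℝ) 1) : |bernsteinSum n F x - bernsteinSum n G x| ≤ ε := by
  have hweight (k : ℕ) : 0 ≤ (n.choose k : ℝ) * x ^ k * (1 - x) ^ (n - k) :=
    mul_nonneg (mul_nonneg (Nat.cast_nonneg _) (pow_nonneg hx.1 _))
      (pow_nonneg (sub_nonneg.2 hx.2) _)
  have hsum : ∑ k ∈ Finset.range (n + 1), (n.choose k : ℝ) * x ^ k * (1 - x) ^ (n - k) = 1 := by
    have hbinom := add_pow x (1 - x) n
    rw [add_sub_cancel, one_pow] at hbinom
    exact (Finset.sum_congr rfl fun k _ => by ring).trans hbinom.symm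
  calc |bernsteinSum n F x - bernsteinSum n G x|
      ≤ ∑ k ∈ Finset.range (n + 1),
          |(n.choose k : ℝ) * x ^ k * (1 - x) ^ (n - k) * (F k - G k)| := by
        simp only [bernsteinSum, ← Finset.sum_sub_distrib, ← mul_sub]
        exact Finset.abs_sum_le_sum_abs _ _
    _ ≤ ∑ k ∈ Finset.range (n + 1), (n.choose k : ℝ) * x ^ k * (1 - x) ^ (n - k) * ε := by
        refine Finset.sum_le_sum fun k hk => ?_
        rw [abs_mul, abs_of_nonneg (hweight k)]
        exact mul_le_mul_of_nonneg_left (h k (Finset.mem_range_succ_iff.1 hk)) (hweight k)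
    _ = ε := by rw [← Finset.sum_mul, hsum, one_mul]

instance isProbabilityMeasure_restrict_Ioc_zero_one :
    IsProbabilityMeasure (volume.restrict (Ioc (0 : ℝ) 1)) :=
  ⟨by simp⟩

lemma integrable_ite_le (μ : Measure ℝ) [IsFiniteMeasure μ] (x a b : ℝ) :
    Integrable (fun u => if u ≤ x then a else b) μ :=
  Integrable.piecewise (s := Iic x) measurableSet_Iic (integrable_const a).integrableOn
    (integrable_const b).integrableOn

lemma integral_ite_le {x : ℝ} (hx : x ∈ Icc (0 : ℝ) 1) (a b : ℝ) :
    ∫ u in Ioc (0 : ℝ) 1, (if u ≤ x then a else b) = x * a + (1 - x) * b := by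
  have hpiecewise := integral_piecewise (μ := volume.restrict (Ioc (0 : ℝ) 1)) (s := Iic x)
    measurableSet_Iic (integrable_const a).integrableOn (integrable_const b).integrableOn
  have hleft : Iic x ∩ Ioc 0 1 = Ioc 0 x := by rw [inter_comm, Ioc_inter_Iic, min_eq_right hx.2]
  have hright : Ioi x ∩ Ioc 0 1 = Ioc x 1 := by rw [inter_comm, Ioc_inter_Ioi, max_eq_right hx.1]
  simpa [piecewise, hleft, hright, hx.1, hx.2, measureReal_restrict_apply] using hpiecewise

lemma bernsteinSum_add_ite (n : ℕ) (F : ℕ → ℝ) (x : ℝ) (c : ℕ) (P : Prop) [Decidable P] :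
    bernsteinSum n (fun k => F (k + (c + if P then 1 else 0))) x =
      if P then bernsteinSum n (fun k => F (k + (c + 1))) x
      else bernsteinSum n (fun k => F (k + c)) x := by
  split_ifs <;> rfl

/- A binomial variable is a sum of Bernoulli variables `𝟙(u ≤ x)` with `u` uniform on `[0, 1]`,
which all points `x` share; for fixed `u` these are nondecreasing in `x`. -/
lemma bernsteinSum_succ_eq_integral (n : ℕ) (F : ℕ → ℝ) {x : ℝ} (hx : x ∈ Icc (0 : ℝ) 1) (c : ℕ) :
    bernsteinSum (n + 1) (fun k => F (k + c)) x =
      ∫ u in Ioc (0 : ℝ) 1, bernsteinSum n (fun k => F (k + (c + if u ≤ x then 1 else 0))) x := by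
  simp only [bernsteinSum_add_ite, integral_ite_le hx, bernsteinSum_succ, Nat.add_right_comm,
    Nat.add_assoc]

lemma lamVarOn_bernsteinSum_le {l : ℕ → ℝ} {K : Set ℝ} (hK : K ⊆ Icc 0 1) {F : ℕ → ℝ} {N : ℕ}
    {B : ℝ≥0∞}
    (hF : ∀ d : ℝ → ℕ, MonotoneOn d K → (∀ x ∈ K, d x ≤ N) → lamVarOn l (fun x => F (d x)) K ≤ B)
    (n : ℕ) (c : ℝ → ℕ) (hc : MonotoneOn c K) (hcN : ∀ x ∈ K, c x + n ≤ N) :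
    lamVarOn l (fun x => bernsteinSum n (fun k => F (k + c x)) x) K ≤ B := by
  induction n generalizing c with
  | zero => simpa [bernsteinSum] using hF c hc hcN
  | succ n ih =>
    rw [lamVarOn_congr fun x hx => bernsteinSum_succ_eq_integral n F (hK hx) (c x)]
    refine lamVarOn_integral_le (fun x _ => ?_) (Eventually.of_forall fun u => ?_)
    · simpa only [bernsteinSum_add_ite] using integrable_ite_le _ x _ _
    refine ih (fun x => c x + if u ≤ x then 1 else 0) (fun x hx y hy hxy => ?_) fun x hx => ?_
    · have hcxy := hc hx hy hxy
      grind
    · have hcx := hcN x hx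
      grind

end BernsteinSum

section Kantorovich

/-- The mean of `f` over the cell `[k / (n + 1), (k + 1) / (n + 1)]`, which is the `k`-th
coefficient of the Kantorovich polynomial `kant n f`. -/
noncomputable def cellMean (n : ℕ) (f : ℝ → ℝ) (k : ℕ) : ℝ :=
  (n + 1) * ∫ t in ((k : ℝ) / (n + 1))..(((k : ℝ) + 1) / (n + 1)), f t

lemma kant_eq_bernsteinSum (n : ℕ) (f : ℝ → ℝ) : kant n f = bernsteinSum n (cellMean n f) :=
  rfl

variable {f : ℝ → ℝ} {n k : ℕ}

lemma cellMean_eq_integral (n : ℕ) (f : ℝ → ℝ) (k : ℕ) :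
    cellMean n f k = ∫ u in Ioc (0 : ℝ) 1, f ((k + u) / (n + 1)) := by
  rw [← intervalIntegral.integral_of_le zero_le_one,
    intervalIntegral.integral_comp_add_left (fun t => f (t / (n + 1))) (k : ℝ),
    intervalIntegral.integral_comp_div f (Nat.cast_add_one_ne_zero n)]
  simp [cellMean]

lemma add_div_mem_Icc (hk : k ≤ n) {u : ℝ} (hu : u ∈ Icc (0 : ℝ) 1) :
    ((k : ℝ) + u) / (n + 1) ∈ Icc (0 : ℝ) 1 := by
  have hkn : (k : ℝ) ≤ n := mod_cast hk
  exact unitInterval.div_mem (add_nonneg k.cast_nonneg hu.1) (by positivity) (add_le_add hkn hu.2)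

lemma integrableOn_comp_add_div (hint : IntegrableOn f (Icc 0 1)) (hk : k ≤ n) :
    IntegrableOn (fun u : ℝ => f ((k + u) / (n + 1))) (Ioc 0 1) := by
  have hsub : uIcc ((k : ℝ) / (n + 1)) ((k + 1) / (n + 1)) ⊆ Icc 0 1 :=
    ordConnected_Icc.uIcc_subset (by simpa using add_div_mem_Icc hk (left_mem_Icc.2 zero_le_one))
      (add_div_mem_Icc hk (right_mem_Icc.2 zero_le_one))
  have hcell : IntervalIntegrable f volume ((k : ℝ) / (n + 1)) ((k + 1) / (n + 1)) :=
    (hint.mono_set hsub).intervalIntegrable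
  have hcomp := (hcell.comp_mul_right (c := ((n : ℝ) + 1)⁻¹)).comp_add_left (k : ℝ)
  simp only [div_inv_eq_mul, div_mul_cancel₀ _ (n.cast_add_one_ne_zero (R := ℝ)), sub_self,
    add_sub_cancel_left, ← div_eq_mul_inv] at hcomp
  exact (intervalIntegrable_iff_integrableOn_Ioc_of_le zero_le_one).1 hcomp

lemma lamVar_kant_le (l : ℕ → ℝ) (hint : IntegrableOn f (Icc 0 1)) (n : ℕ) :
    lamVar l (kant n f) ≤ lamVar l f := by
  refine lamVarOn_bernsteinSum_le Subset.rfl (F := cellMean n f) (N := n) (fun d hd hdn => ?_) n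
    (fun _ => 0) monotoneOn_const fun _ _ => (Nat.zero_add n).le
  simp only [cellMean_eq_integral]
  refine lamVarOn_integral_le (fun x hx => integrableOn_comp_add_div hint (hdn x hx))
    (ae_restrict_of_forall_mem measurableSet_Ioc fun u hu => ?_)
  refine lamVarOn_comp_le_of_monotoneOn (fun x hx y hy hxy => ?_)
    fun x hx => add_div_mem_Icc (hdn x hx) (Ioc_subset_Icc_self hu)
  have hdxy := hd hx hy hxy
  gcongr

lemma contDiff_kant (n : ℕ) (f : ℝ → ℝ) : ContDiff ℝ 1 (kant n f) := by
  unfold kant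
  fun_prop

lemma boundedVariationOn_kant (n : ℕ) (f : ℝ → ℝ) : BoundedVariationOn (kant n f) (Icc 0 1) := by
  rw [← uIcc_of_le zero_le_one]
  exact (contDiff_kant n f).contDiffOn.absolutelyContinuousOnInterval.boundedVariationOn

lemma bern_eq_bernsteinSum (n : ℕ) (f : ℝ → ℝ) : bern n f = bernsteinSum n fun k => f (k / n) := by
  funext x
  exact Finset.sum_congr rfl fun k _ => by ring

lemma tendstoUniformlyOn_bern (hf : ContinuousOn f (Icc 0 1)) :
    TendstoUniformlyOn (fun n => bern n f) f atTop (Icc 0 1) := by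
  let g : C(unitInterval, ℝ) := ⟨_, hf.domRestrict⟩
  have hbern (n : ℕ) (x : unitInterval) : bernsteinApproximation n g x = bern n f x := by
    rw [bernsteinApproximation.apply, bern, Finset.sum_range]
    refine Finset.sum_congr rfl fun k _ => ?_
    simp only [bernstein_apply, bernstein.z, ContinuousMap.coe_mk, domRestrict_apply,
      smul_eq_mul, g]
    ring
  rw [tendstoUniformlyOn_iff_tendstoUniformly_comp_coe]
  have hunif := ContinuousMap.tendsto_iff_tendstoUniformly.1 (bernsteinApproximation_uniform g)
  simp only [hbern] at hunif
  exact hunif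

lemma abs_add_div_sub_div_le (hn : n ≠ 0) (hk : k ≤ n) {u : ℝ} (hu : u ∈ Icc (0 : ℝ) 1) :
    |((k : ℝ) + u) / (n + 1) - k / n| ≤ 1 / (n + 1) := by
  have hn0 : (0 : ℝ) < n := by positivity
  have hkn := unitInterval.div_mem k.cast_nonneg hn0.le (mod_cast hk)
  have hdiff : ((k : ℝ) + u) / (n + 1) - k / n = (u - k / n) / (n + 1) := by
    field_simp
    ring
  rw [hdiff, abs_div, abs_of_pos (by positivity : (0 : ℝ) < n + 1)]
  gcongr
  rw [abs_le]
  constructor <;> linarith [hu.1, hu.2, hkn.1, hkn.2]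

lemma abs_cellMean_sub_le (hint : IntegrableOn f (Icc 0 1)) (hk : k ≤ n) {a ε : ℝ}
    (h : ∀ u ∈ Icc (0 : ℝ) 1, |f ((k + u) / (n + 1)) - a| ≤ ε) : |cellMean n f k - a| ≤ ε := by
  have hmean : cellMean n f k - a = ∫ u in Ioc (0 : ℝ) 1, (f ((k + u) / (n + 1)) - a) := by
    rw [integral_sub (integrableOn_comp_add_div hint hk) (integrable_const a),
      ← cellMean_eq_integral]
    simp
  rw [hmean]
  simpa using norm_setIntegral_le_of_norm_le_const (μ := volume) (s := Ioc (0 : ℝ) 1)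
    (f := fun u => f ((k + u) / (n + 1)) - a) (C := ε) (by simp)
    fun u hu => h u (Ioc_subset_Icc_self hu)

lemma eventually_forall_abs_cellMean_sub_le (hf : ContinuousOn f (Icc 0 1)) {ε : ℝ} (hε : 0 < ε) :
    ∀ᶠ n : ℕ in atTop, ∀ k ≤ n, |cellMean n f k - f (k / n)| ≤ ε := by
  obtain ⟨δ, hδ, hfδ⟩ := Metric.uniformContinuousOn_iff.1
    (isCompact_Icc.uniformContinuousOn_of_continuous hf) ε hε
  filter_upwards [tendsto_one_div_add_atTop_nhds_zero_nat.eventually_lt_const hδ,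
    eventually_ne_atTop 0] with n hnδ hn k hk
  refine abs_cellMean_sub_le hf.integrableOn_Icc hk fun u hu => ?_
  have hnode := unitInterval.div_mem k.cast_nonneg n.cast_nonneg (mod_cast hk : (k : ℝ) ≤ n)
  exact (hfδ _ (add_div_mem_Icc hk hu) _ hnode
    ((abs_add_div_sub_div_le hn hk hu).trans_lt hnδ)).le

lemma tendstoUniformlyOn_kant (hf : ContinuousOn f (Icc 0 1)) :
    TendstoUniformlyOn (fun n => kant n f) f atTop (Icc 0 1) := by
  have hbern := Metric.tendstoUniformlyOn_iff.1 (tendstoUniformlyOn_bern hf)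
  refine Metric.tendstoUniformlyOn_iff.2 fun ε hε => ?_
  filter_upwards [hbern (ε / 2) (half_pos hε),
    eventually_forall_abs_cellMean_sub_le hf (half_pos hε)] with n hbern_n hcell x hx
  have hkant : dist (bern n f x) (kant n f x) ≤ ε / 2 := by
    rw [dist_comm, kant_eq_bernsteinSum, bern_eq_bernsteinSum]
    exact abs_bernsteinSum_sub_le hcell hx
  calc dist (f x) (kant n f x)
      ≤ dist (f x) (bern n f x) + dist (bern n f x) (kant n f x) := dist_triangle _ _ _
    _ < ε / 2 + ε / 2 := add_lt_add_of_lt_of_le (hbern_n x hx) hkant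
    _ = ε := add_halves ε

end Kantorovich

theorem kantorovich_lamNorm_convergence_iff_general (l : ℕ → ℝ) (hmono : Monotone l)
    (hpos : ∀ n, 0 < l n) (htop : Tendsto l atTop atTop)
    (f : ℝ → ℝ) (hint : IntegrableOn f (Set.Icc 0 1) volume) :
    Tendsto (fun n => lamNorm l (fun x => kant n f x - f x)) atTop (𝓝 0) ↔
      (ContinuousOn f (Set.Icc 0 1) ∧ lamVar l f < ⊤ ∧ ContInLamVar l f) := by
  refine ⟨fun h => ⟨?_, ?_, ?_⟩, fun ⟨hcont, _, hlam⟩ => ?_⟩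
  · exact (tendstoUniformlyOn_of_tendsto_lamNorm_sub (hpos 0) h).continuousOn
      (Frequently.of_forall fun n => (contDiff_kant n f).continuous.continuousOn)
  · exact lamVar_lt_top_of_tendsto_lamVar_sub
      (fun n => lamVar_lt_top_of_boundedVariationOn hmono (hpos 0) (boundedVariationOn_kant n f))
      (tendsto_lamVar_of_tendsto_lamNorm h)
  · exact contInLamVar_of_tendsto_lamVar_sub hmono hpos
      (fun n => contInLamVar_of_boundedVariationOn htop (boundedVariationOn_kant n f))
      (tendsto_lamVar_of_tendsto_lamNorm h)
  · exact tendsto_lamNorm_sub_of_tendstoUniformlyOn (tendstoUniformlyOn_kant hcont)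
      (fun n p => lamVar_kant_le (fun m => l (m + p)) hint n) hlam

/-- If `Λ` is a proper Λ-sequence and `f : [0,1] → ℝ` is Lebesgue-integrable,
then `‖K_n f - f‖_Λ → 0` if and only if `f` is continuous, of bounded Λ-variation, and
continuous in Λ-variation. -/
theorem kantorovich_lamNorm_convergence_iff (l : ℕ → ℝ) (hl : IsProperLambdaSeq l)
    (f : ℝ → ℝ) (hint : IntegrableOn f (Set.Icc 0 1) volume) :
    Tendsto (fun n => lamNorm l (fun x => kant n f x - f x)) atTop (𝓝 0) ↔
      (ContinuousOn f (Set.Icc 0 1) ∧ lamVar l f < ⊤ ∧ ContInLamVar l f) :=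
  kantorovich_lamNorm_convergence_iff_general l hl.1.1 hl.1.2.1 hl.2 f hint
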